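/- In the tableau T_{φ0}, if ρ is a maximal ε-path that is not blocked and whose label L(ρ) (the label of its last node) is not blatantly inconsistent, then L(ρ) is closed under sub+-formulas: for every φ ∈ L(ρ) and every ψ ∈ sub+(φ), either ψ ∈ L(ρ) or ∼ψ ∈ L(ρ), where ∼ψ = χ if ψ = ¬χ and ∼ψ = ¬ψ otherwise. -/

import Mathlib

/-!
Formalization of the logic of strategically knowing how (ELKh_n) and of the
tableau procedure for it.
-/

namespace ELKh

/-- Formulas of the language ELKh_n:
`φ ::= ⊥ | p | ¬φ | (φ ∧ φ) | K_i φ | Kh_i φ`. -/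
inductive Formula (P I : Type) : Type
  | bot : Formula P I
  | atom : P → Formula P I
  | neg : Formula P I → Formula P I
  | and : Formula P I → Formula P I → Formula P I
  | know : I → Formula P I → Formula P I
  | kh : I → Formula P I → Formula P I

variable {P I : Type}

/-- Models of ELKh_n: states with equivalence relations `∼ᵢ`, actions for each
agent, a transition relation for each action, and a valuation. -/
structure Model (P I : Type) where
  W : Type
  sim : I → W → W → Prop
  equiv : ∀ i, Equivalence (sim i)
  Act : I → Type
  R : (i : I) → Act i → W → W → Prop
  V : W → P → Prop

/-- Transition between `i`-equivalence classes (classes are represented by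
member states): `[s]ⁱ →ₐ [t]ⁱ` iff some `s' ∈ [s]ⁱ`, `t' ∈ [t]ⁱ` have `R a s' t'`. -/
def Model.ctrans (M : Model P I) (i : I) (a : M.Act i) (s t : M.W) : Prop :=
  ∃ s' t', M.sim i s s' ∧ M.sim i t t' ∧ M.R i a s' t'

/-- Uniformly executable strategies for agent `i`: partial functions from
`∼ᵢ`-equivalence classes to actions of `i` (hence constant on classes), whose
chosen action is executable at every member of the class. -/
structure Strategy (M : Model P I) (i : I) where
  act : M.W → Option (M.Act i)
  congr : ∀ s t, M.sim i s t → act s = act t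
  exec : ∀ s a, act s = some a → ∀ t, M.sim i s t → ∃ u, M.R i a t u

namespace Strategy

variable {M : Model P I} {i : I}

/-- The `k`-th step of the sequence of classes `[δ 0][δ 1]⋯` is a σ-step. -/
def Steps (σ : Strategy M i) (δ : ℕ → M.W) (k : ℕ) : Prop :=
  ∃ a, σ.act (δ k) = some a ∧ M.ctrans i a (δ k) (δ (k+1))

/-- `[δ 0]⋯[δ h]` is a (finite) possible execution of σ. -/
def FinExec (σ : Strategy M i) (δ : ℕ → M.W) (h : ℕ) : Prop :=
  ∀ k < h, σ.Steps δ k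

/-- `[δ 0]⋯[δ h]` is a complete finite execution of σ (its end class is not in
the domain of σ). -/
def CompleteFinExec (σ : Strategy M i) (δ : ℕ → M.W) (h : ℕ) : Prop :=
  σ.FinExec δ h ∧ σ.act (δ h) = none

/-- `[δ 0][δ 1]⋯` is an infinite possible execution of σ (such an execution is
automatically complete). -/
def InfExec (σ : Strategy M i) (δ : ℕ → M.W) : Prop :=
  ∀ k, σ.Steps δ k

end Strategy

/-- Satisfaction for ELKh_n.  `Kh_i φ` holds at `s` iff there is a strategy σ
for `i` such that all complete executions of σ starting from `[s]ⁱ` are finite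
(equivalently: there is no infinite execution of σ from `[s]ⁱ`) and every state
of every end class of a complete (finite) execution from `[s]ⁱ` satisfies `φ`. -/
def Sat (M : Model P I) : M.W → Formula P I → Prop
  | _, .bot => False
  | s, .atom p => M.V s p
  | s, .neg φ => ¬ Sat M s φ
  | s, .and φ ψ => Sat M s φ ∧ Sat M s ψ
  | s, .know i φ => ∀ t, M.sim i s t → Sat M t φ
  | s, .kh i φ => ∃ σ : Strategy M i,
      (∀ δ : ℕ → M.W, M.sim i s (δ 0) → ¬ σ.InfExec δ) ∧
      (∀ (δ : ℕ → M.W) (h : ℕ), M.sim i s (δ 0) → σ.CompleteFinExec δ h →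
        ∀ t, M.sim i (δ h) t → Sat M t φ)

/-! ### Subformulas -/

/-- The set of subformulas of a formula. -/
def subf : Formula P I → Set (Formula P I)
  | .bot => {Formula.bot}
  | .atom p => {Formula.atom p}
  | .neg φ => insert (Formula.neg φ) (subf φ)
  | .and φ ψ => insert (Formula.and φ ψ) (subf φ ∪ subf ψ)
  | .know i φ => insert (Formula.know i φ) (subf φ)
  | .kh i φ => insert (Formula.kh i φ) (subf φ)

/-- `sub⁺(φ₀) = {ψ, ¬ψ : ψ subformula of φ₀} ∪ {Kᵢψ, ¬Kᵢψ : Khᵢψ subformula of φ₀}`. -/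
def subPlus (φ0 : Formula P I) : Set (Formula P I) :=
  {χ | ∃ ψ ∈ subf φ0, χ = ψ ∨ χ = Formula.neg ψ} ∪
  {χ | ∃ i ψ, Formula.kh i ψ ∈ subf φ0 ∧
      (χ = Formula.know i ψ ∨ χ = Formula.neg (Formula.know i ψ))}

/-- `∼ψ`:  `∼¬χ = χ`, and `∼ψ = ¬ψ` otherwise. -/
def simNeg : Formula P I → Formula P I
  | .neg χ => χ
  | ψ => Formula.neg ψ

/-! ### Labeled trees -/

/-- Labels of tableau edges: `ε`, an agent `i`, or an action `a_{Khᵢψ}`. -/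
inductive ELabel (P I : Type) : Type
  | eps : ELabel P I
  | ag : I → ELabel P I
  | act : I → Formula P I → ELabel P I

/-- Labeled rooted trees: each node is labeled with a set of formulas, each
non-root node carries the label of the edge connecting it to its parent, and
`blockedBy n = some n'` records that the node `n` is blocked by `n'`. -/
structure LTree (P I : Type) where
  Node : Type
  root : Node
  parent : Node → Option Node
  depth : Node → ℕ
  label : Node → Set (Formula P I)
  elabel : Node → ELabel P I
  blockedBy : Node → Option Node
  parent_root : parent root = none
  eq_root : ∀ n, parent n = none → n = root
  depth_root : depth root = 0
  depth_parent : ∀ n m, parent n = some m → depth n = depth m + 1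

variable (T : LTree P I)

/-- The children of a node. -/
def Children (n : T.Node) : Set T.Node := {m | T.parent m = some n}

/-- A node is a leaf iff it has no children. -/
def IsLeaf (n : T.Node) : Prop := ∀ m, T.parent m ≠ some n

/-- `Ancestor T m n`: `m` is a proper ancestor of `n`. -/
def Ancestor (m n : T.Node) : Prop :=
  Relation.TransGen (fun a b => T.parent b = some a) m n

/-- `IAnc T i m n`: `m` is an `i`-ancestor of `n`, i.e. a proper ancestor of
`n` connected to `n` by a path all of whose edges are labeled `i` or `ε`. -/
inductive IAnc (i : I) : T.Node → T.Node → Prop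
  | single {m n} : T.parent n = some m →
      (T.elabel n = ELabel.eps ∨ T.elabel n = ELabel.ag i) → IAnc i m n
  | cons {m k n} : T.parent n = some k →
      (T.elabel n = ELabel.eps ∨ T.elabel n = ELabel.ag i) →
      IAnc i m k → IAnc i m n

/-! ### The tableau construction -/

/-- A set of formulas is blatantly inconsistent iff it contains `⊥` or some
pair `ψ, ¬ψ`. -/
def Blatant (Γ : Set (Formula P I)) : Prop :=
  Formula.bot ∈ Γ ∨ ∃ ψ, ψ ∈ Γ ∧ Formula.neg ψ ∈ Γ

/-- `AutoChecked Γ φ` holds iff none of the expansion rules (a)-(g) is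
applicable to `φ` in the label `Γ`; such formulas are (and remain) marked
``checked'' by step (h) of the construction. -/
def AutoChecked (Γ : Set (Formula P I)) : Formula P I → Prop
  | .neg (.neg ψ) => ψ ∈ Γ
  | .and ψ χ => ψ ∈ Γ ∧ χ ∈ Γ
  | .neg (.and ψ χ) =>
      (Formula.neg ψ ∈ Γ ∧ Formula.neg χ ∈ Γ) ∨
      (Formula.neg ψ ∈ Γ ∧ χ ∈ Γ) ∨ (ψ ∈ Γ ∧ Formula.neg χ ∈ Γ)
  | .know _ ψ => ψ ∈ Γ
  | .neg (.know _ ψ) => Formula.neg ψ ∈ Γ ∨ ψ ∈ Γ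
  | .kh i ψ => Formula.neg (Formula.know i ψ) ∈ Γ ∨ Formula.know i ψ ∈ Γ
  | .neg (.kh i ψ) => Formula.neg (Formula.know i ψ) ∈ Γ
  | _ => True

/-- All formulas of `Γ` are checked; nodes with such labels are the ``and''
nodes (expanded by step (2)), the remaining expanded nodes are ``or'' nodes. -/
def Saturated (Γ : Set (Formula P I)) : Prop := ∀ φ ∈ Γ, AutoChecked Γ φ

/-- The labels of the children created when one of the rules (a)-(g) processes
the formula `φ` at a node labeled `Γ`. -/
def orOut (Γ : Set (Formula P I)) : Formula P I → Set (Set (Formula P I))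
  | .neg (.neg ψ) => {insert ψ Γ}
  | .and ψ χ => {insert ψ (insert χ Γ)}
  | .neg (.and ψ χ) =>
      {insert (Formula.neg ψ) (insert (Formula.neg χ) Γ),
       insert (Formula.neg ψ) (insert χ Γ),
       insert ψ (insert (Formula.neg χ) Γ)}
  | .know _ ψ => {insert ψ Γ}
  | .neg (.know _ ψ) => {insert (Formula.neg ψ) Γ, insert ψ Γ}
  | .kh i ψ =>
      {insert (Formula.neg (Formula.know i ψ)) Γ, insert (Formula.know i ψ) Γ}
  | .neg (.kh i ψ) => {insert (Formula.neg (Formula.know i ψ)) Γ}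
  | _ => ∅

/-- `Σ(n,¬Kᵢψ) = {¬ψ} ∪ Γ|Kᵢ ∪ Γ|¬Kᵢ ∪ Γ|Khᵢ ∪ Γ|¬Khᵢ` where `Γ = L(n)`. -/
def SigmaSet (Γ : Set (Formula P I)) (i : I) (ψ : Formula P I) :
    Set (Formula P I) :=
  insert (Formula.neg ψ)
    {φ ∈ Γ | (∃ χ, φ = Formula.know i χ) ∨ (∃ χ, φ = Formula.neg (Formula.know i χ)) ∨
             (∃ χ, φ = Formula.kh i χ) ∨ (∃ χ, φ = Formula.neg (Formula.kh i χ))}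

/-- Expansion condition for ``or'' nodes (step (1), rules (a)-(g)): some
unchecked formula of the label is processed and the children of the node are
exactly the prescribed `ε`-children. -/
def OrNodeCond (n : T.Node) : Prop :=
  ∃ φ ∈ T.label n, ¬ AutoChecked (T.label n) φ ∧
    (∀ Δ ∈ orOut (T.label n) φ,
      ∃ m, T.parent m = some n ∧ T.elabel m = ELabel.eps ∧ T.label m = Δ ∧
        T.blockedBy m = none) ∧
    (∀ m, T.parent m = some n →
      T.elabel m = ELabel.eps ∧ T.label m ∈ orOut (T.label n) φ ∧
        T.blockedBy m = none)

/-- Expansion condition for ``and'' nodes (step (2), rules (i), (j), (k)): the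
children of the node are exactly those prescribed by the three rules, and a
(k)-child is blocked iff some ancestor carries the same label. -/
def AndNodeCond (n : T.Node) : Prop :=
  (∀ i ψ, Formula.neg (Formula.know i ψ) ∈ T.label n →
    ¬ (∃ n', IAnc T i n' n ∧ T.label n' = SigmaSet (T.label n) i ψ) →
    ∃ m, T.parent m = some n ∧ T.elabel m = ELabel.ag i ∧
      T.label m = SigmaSet (T.label n) i ψ ∧ T.blockedBy m = none) ∧
  (∀ i ψ, Formula.kh i ψ ∈ T.label n → Formula.neg (Formula.know i ψ) ∈ T.label n →
    ∃ m, T.parent m = some n ∧ T.elabel m = ELabel.act i ψ ∧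
      T.label m = {Formula.know i ψ} ∧ T.blockedBy m = none) ∧
  (∀ i ψ χ, Formula.neg (Formula.kh i χ) ∈ T.label n →
    Formula.kh i ψ ∈ T.label n → Formula.neg (Formula.know i ψ) ∈ T.label n →
    ∃ m, T.parent m = some n ∧ T.elabel m = ELabel.act i ψ ∧
      T.label m = {Formula.know i ψ, Formula.neg (Formula.kh i χ)} ∧
      ((∃ n', Ancestor T n' m ∧ T.label n' = T.label m) ↔ T.blockedBy m ≠ none)) ∧
  (∀ m, T.parent m = some n →
    (∃ i ψ, T.elabel m = ELabel.ag i ∧ Formula.neg (Formula.know i ψ) ∈ T.label n ∧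
      T.label m = SigmaSet (T.label n) i ψ ∧
      ¬ (∃ n', IAnc T i n' n ∧ T.label n' = SigmaSet (T.label n) i ψ)) ∨
    (∃ i ψ, T.elabel m = ELabel.act i ψ ∧ Formula.kh i ψ ∈ T.label n ∧
      Formula.neg (Formula.know i ψ) ∈ T.label n ∧
      T.label m = {Formula.know i ψ}) ∨
    (∃ i ψ χ, T.elabel m = ELabel.act i ψ ∧ Formula.neg (Formula.kh i χ) ∈ T.label n ∧
      Formula.kh i ψ ∈ T.label n ∧ Formula.neg (Formula.know i ψ) ∈ T.label n ∧
      T.label m = {Formula.know i ψ, Formula.neg (Formula.kh i χ)}))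

/-- `T` is a tableau for `φ₀`: the root is labeled `{φ₀}`, blocked nodes are
blocked by an ancestor with the same label, blocked nodes and blatantly
inconsistent nodes are leaves, and every other node is expanded according to
step (1) (``or'' nodes) or step (2) (``and'' nodes) of the construction. -/
structure IsTableau (φ0 : Formula P I) (T : LTree P I) : Prop where
  root_label : T.label T.root = {φ0}
  blocked_spec : ∀ n n', T.blockedBy n = some n' →
    Ancestor T n' n ∧ T.label n' = T.label n
  blocked_leaf : ∀ n, T.blockedBy n ≠ none → IsLeaf T n
  blatant_leaf : ∀ n, Blatant (T.label n) → IsLeaf T n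
  or_node : ∀ n, ¬ Blatant (T.label n) → T.blockedBy n = none →
    ¬ Saturated (T.label n) → OrNodeCond T n
  and_node : ∀ n, ¬ Blatant (T.label n) → T.blockedBy n = none →
    Saturated (T.label n) → AndNodeCond T n

/-! ### Subtrees -/

/-- A subtree: a set of nodes containing the root and closed under parents. -/
def IsSubtree (S : Set T.Node) : Prop :=
  T.root ∈ S ∧ ∀ n ∈ S, ∀ m, T.parent n = some m → m ∈ S

/-- A complete subtree: it contains the root, all children of each of its
``and'' non-leaf nodes, and at least one child of each of its ``or'' non-leaf
nodes. -/
def CompleteSubtree (S : Set T.Node) : Prop :=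
  IsSubtree T S ∧
  (∀ n ∈ S, ¬ IsLeaf T n → Saturated (T.label n) → ∀ m ∈ Children T n, m ∈ S) ∧
  (∀ n ∈ S, ¬ IsLeaf T n → ¬ Saturated (T.label n) → ∃ m ∈ Children T n, m ∈ S)

/-- A subtree is closed iff some of its nodes has a blatantly inconsistent
label; otherwise it is open. -/
def ClosedSubtree (S : Set T.Node) : Prop := ∃ n ∈ S, Blatant (T.label n)

/-- A tableau is closed iff all its complete subtrees are closed. -/
def TableauClosed : Prop := ∀ S : Set T.Node, CompleteSubtree T S → ClosedSubtree T S

/-! ### Maximal ε-paths and the induced model -/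

/-- An `ε`-edge from `m` down to `n` inside the node set `S`. -/
def EpsStep (S : Set T.Node) (m n : T.Node) : Prop :=
  m ∈ S ∧ n ∈ S ∧ T.parent n = some m ∧ T.elabel n = ELabel.eps

/-- `n` is an `ε`-descendant of `m` inside `S` (reflexive-transitive). -/
def EpsDesc (S : Set T.Node) : T.Node → T.Node → Prop :=
  Relation.ReflTransGen (EpsStep T S)

/-- A maximal `ε`-path of the subtree with node set `S`, recorded by its
initial node `top` and its end node `bot`.  Its label is `T.label bot`. -/
structure MaxEpsPath (T : LTree P I) (S : Set T.Node) where
  top : T.Node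
  bot : T.Node
  top_mem : top ∈ S
  bot_mem : bot ∈ S
  desc : EpsDesc T S top bot
  top_max : ∀ m, ¬ EpsStep T S m top
  bot_max : ∀ m, ¬ EpsStep T S bot m

/-- The states of the induced model: non-blocked maximal `ε`-paths. -/
def PathW (T : LTree P I) (S : Set T.Node) : Type :=
  {ρ : MaxEpsPath T S // T.blockedBy ρ.bot = none}

/-- `ρ₂` is an `i`-child path of `ρ₁`: `ρ₁ρ₂` is a path whose connecting edge
is labeled `i`. -/
def ISimStep (S : Set T.Node) (i : I) (ρ1 ρ2 : PathW T S) : Prop :=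
  T.parent ρ2.1.top = some ρ1.1.bot ∧ T.elabel ρ2.1.top = ELabel.ag i

/-- The node `n'` lies on the maximal `ε`-path `ρ`. -/
def OnPath (S : Set T.Node) (ρ : MaxEpsPath T S) (n' : T.Node) : Prop :=
  EpsDesc T S ρ.top n' ∧ EpsDesc T S n' ρ.bot

/-- The model `M^T` induced by the (complete) subtree with node set `S`:
states are the non-blocked maximal `ε`-paths, `∼ᵢ` is the least equivalence
relation containing the `i`-edge steps, actions of agent `i` are the actions
`a_{Khᵢψ}` labeling edges of the subtree, `(ρ, ρ') ∈ R_a` iff there is an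
`a`-edge from the end of `ρ` to the start of a maximal `ε`-path `ρ''` where
`ρ'' = ρ'` or `ρ''` is blocked by a node lying on `ρ'`, and `ρ ∈ V(p)` iff
`p ∈ L(ρ)`. -/
def inducedModel (T : LTree P I) (S : Set T.Node) : Model P I where
  W := PathW T S
  sim := fun i => Relation.EqvGen (ISimStep T S i)
  equiv := fun _ => Relation.EqvGen.is_equivalence _
  Act := fun i => {ψ : Formula P I // ∃ m n, m ∈ S ∧ n ∈ S ∧
    T.parent m = some n ∧ T.elabel m = ELabel.act i ψ}
  R := fun i a ρ1 ρ2 => ∃ ρ'' : MaxEpsPath T S,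
    T.parent ρ''.top = some ρ1.1.bot ∧ T.elabel ρ''.top = ELabel.act i a.1 ∧
    (ρ'' = ρ2.1 ∨ ∃ n', T.blockedBy ρ''.bot = some n' ∧ OnPath T S ρ2.1 n')
  V := fun ρ p => Formula.atom p ∈ T.label ρ.1.bot

/-- `L(ρ)|Kᵢ`: the `Kᵢ`-formulas of `Γ`. -/
def projK (i : I) (Γ : Set (Formula P I)) : Set (Formula P I) :=
  {φ ∈ Γ | ∃ ψ, φ = Formula.know i ψ}

/-- `L(ρ)|¬Kᵢ`: the `¬Kᵢ`-formulas of `Γ`. -/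
def projNK (i : I) (Γ : Set (Formula P I)) : Set (Formula P I) :=
  {φ ∈ Γ | ∃ ψ, φ = Formula.neg (Formula.know i ψ)}

/-- `L(ρ)|Khᵢ`: the `Khᵢ`-formulas of `Γ`. -/
def projKh (i : I) (Γ : Set (Formula P I)) : Set (Formula P I) :=
  {φ ∈ Γ | ∃ ψ, φ = Formula.kh i ψ}

/-- `L(ρ)|¬Khᵢ`: the `¬Khᵢ`-formulas of `Γ`. -/
def projNKh (i : I) (Γ : Set (Formula P I)) : Set (Formula P I) :=
  {φ ∈ Γ | ∃ ψ, φ = Formula.neg (Formula.kh i ψ)}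

/-!
The last node of a maximal `ε`-path in a complete subtree, if neither blocked nor blatantly
inconsistent, is saturated: otherwise it would be an or-node with an `ε`-child in the subtree, which
would prolong the path. Each rule (a)-(g) makes a saturated label that contains `φ` or `¬φ` decide
the immediate subformulas of `φ` in the same sense (through `Kᵢψ` when `φ = Khᵢψ`), so deciding
passes to all subformulas by induction. The operator `∼` is no substitute for `¬` in this
induction: `χ` alone decides `¬χ` up to `∼`, but if `¬χ` is a subformula then `¬¬χ` is in `sub⁺`,
and this requires `¬χ` or `¬¬χ` to be in the label.
-/

/-- `Γ` decides `φ` iff it contains `φ` or `¬φ`; this is the invariant passed down to subformulas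
in a saturated label. The syntactic negation `¬φ` is meant here, not `∼φ`. -/
def Decides (Γ : Set (Formula P I)) (φ : Formula P I) : Prop :=
  φ ∈ Γ ∨ Formula.neg φ ∈ Γ

namespace Saturated

variable {Γ : Set (Formula P I)} {φ ψ : Formula P I} {i : I}

lemma decides_of_decides_neg (hs : Saturated Γ) (h : Decides Γ (.neg φ)) : Decides Γ φ :=
  h.elim Or.inr fun hmem => Or.inl (hs _ hmem)

lemma decides_of_decides_and (hs : Saturated Γ) (h : Decides Γ (.and φ ψ)) :
    Decides Γ φ ∧ Decides Γ ψ := by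
  rcases h with hand | hnand
  · obtain ⟨hφ, hψ⟩ : φ ∈ Γ ∧ ψ ∈ Γ := hs _ hand
    exact ⟨Or.inl hφ, Or.inl hψ⟩
  · rcases hs _ hnand with ⟨hnφ, hnψ⟩ | ⟨hnφ, hψ⟩ | ⟨hφ, hnψ⟩
    · exact ⟨Or.inr hnφ, Or.inr hnψ⟩
    · exact ⟨Or.inr hnφ, Or.inl hψ⟩
    · exact ⟨Or.inl hφ, Or.inr hnψ⟩

lemma decides_of_decides_know (hs : Saturated Γ) (h : Decides Γ (.know i φ)) : Decides Γ φ := by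
  rcases h with hknow | hnknow
  · exact Or.inl (hs _ hknow)
  · exact Or.symm (hs _ hnknow)

lemma decides_know_of_decides_kh (hs : Saturated Γ) (h : Decides Γ (.kh i φ)) :
    Decides Γ (.know i φ) := by
  rcases h with hkh | hnkh
  · exact Or.symm (hs _ hkh)
  · exact Or.inr (hs _ hnkh)

lemma decides_of_mem_subf (hs : Saturated Γ) (h : Decides Γ φ) (hψ : ψ ∈ subf φ) :
    Decides Γ ψ := by
  induction φ with
  | bot | atom =>
    obtain rfl := hψ
    exact h
  | neg φ ih =>
    rcases hψ with rfl | hψ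
    · exact h
    · exact ih (hs.decides_of_decides_neg h) hψ
  | and φ₁ φ₂ ih₁ ih₂ =>
    rcases hψ with rfl | hψ | hψ
    · exact h
    · exact ih₁ (hs.decides_of_decides_and h).1 hψ
    · exact ih₂ (hs.decides_of_decides_and h).2 hψ
  | know i φ ih =>
    rcases hψ with rfl | hψ
    · exact h
    · exact ih (hs.decides_of_decides_know h) hψ
  | kh i φ ih =>
    rcases hψ with rfl | hψ
    · exact h
    · exact ih (hs.decides_of_decides_know (hs.decides_know_of_decides_kh h)) hψ

lemma mem_or_simNeg_mem (hs : Saturated Γ) (h : Decides Γ φ) : φ ∈ Γ ∨ simNeg φ ∈ Γ := by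
  rcases h with hφ | hnφ
  · exact Or.inl hφ
  · cases φ with
    | neg φ => exact Or.inr (hs _ hnφ)
    | _ => exact Or.inr hnφ

lemma mem_or_simNeg_mem_of_mem_subPlus (hs : Saturated Γ) (h : Decides Γ φ)
    (hψ : ψ ∈ subPlus φ) : ψ ∈ Γ ∨ simNeg ψ ∈ Γ := by
  rcases hψ with ⟨χ, hχ, rfl | rfl⟩ | ⟨i, χ, hχ, rfl | rfl⟩
  · exact hs.mem_or_simNeg_mem (hs.decides_of_mem_subf h hχ)
  · exact (hs.decides_of_mem_subf h hχ).symm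
  · exact hs.decides_know_of_decides_kh (hs.decides_of_mem_subf h hχ)
  · exact (hs.decides_know_of_decides_kh (hs.decides_of_mem_subf h hχ)).symm

end Saturated

lemma orOut_nonempty_of_not_autoChecked {Γ : Set (Formula P I)} {φ : Formula P I}
    (h : ¬ AutoChecked Γ φ) : (orOut Γ φ).Nonempty := by
  rcases φ with _ | _ | (_ | _ | _ | _ | _ | _) | _ | _ | _ <;>
    simp_all [AutoChecked, orOut, Set.insert_nonempty]

section EpsPaths

variable {T : LTree P I} {S : Set T.Node} {n : T.Node}

lemma OrNodeCond.not_saturated (hn : OrNodeCond T n) : ¬ Saturated (T.label n) := by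
  obtain ⟨φ, hφ, hunchecked, -, -⟩ := hn
  exact fun hs => hunchecked (hs φ hφ)

lemma OrNodeCond.not_isLeaf (hn : OrNodeCond T n) : ¬ IsLeaf T n := by
  obtain ⟨φ, -, hunchecked, hchildren, -⟩ := hn
  obtain ⟨Δ, hΔ⟩ := orOut_nonempty_of_not_autoChecked hunchecked
  obtain ⟨m, hm, -⟩ := hchildren Δ hΔ
  exact fun hleaf => hleaf m hm

lemma OrNodeCond.elabel_eq_eps (hn : OrNodeCond T n) {m : T.Node} (hm : m ∈ Children T n) :
    T.elabel m = ELabel.eps := by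
  obtain ⟨_, _, _, _, hchildren⟩ := hn
  exact (hchildren m hm).1

lemma CompleteSubtree.exists_epsStep (hS : CompleteSubtree T S) (hnS : n ∈ S)
    (hn : OrNodeCond T n) : ∃ m, EpsStep T S n m := by
  obtain ⟨m, hm, hmS⟩ := hS.2.2 n hnS hn.not_isLeaf hn.not_saturated
  exact ⟨m, hnS, hmS, hm, hn.elabel_eq_eps hm⟩

lemma MaxEpsPath.saturated_label {φ0 : Formula P I} (hT : IsTableau φ0 T)
    (hS : CompleteSubtree T S) (ρ : MaxEpsPath T S) (hnb : T.blockedBy ρ.bot = none)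
    (hni : ¬ Blatant (T.label ρ.bot)) : Saturated (T.label ρ.bot) := by
  by_contra hs
  obtain ⟨m, hm⟩ := hS.exists_epsStep ρ.bot_mem (hT.or_node ρ.bot hni hnb hs)
  exact ρ.bot_max m hm

lemma completeSubtree_univ (T : LTree P I) : CompleteSubtree T Set.univ := by
  refine ⟨⟨trivial, fun _ _ _ _ => trivial⟩, fun _ _ _ _ _ _ => trivial, fun n _ hleaf _ => ?_⟩
  obtain ⟨m, hm⟩ : ∃ m, T.parent m = some n := by simpa [IsLeaf] using hleaf
  exact ⟨m, hm, trivial⟩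

theorem maxEpsPath_label_subPlus_closed_general {φ0 : Formula P I} (hT : IsTableau φ0 T)
    (hS : CompleteSubtree T S) (ρ : MaxEpsPath T S) (hnb : T.blockedBy ρ.bot = none)
    (hni : ¬ Blatant (T.label ρ.bot)) :
    ∀ φ ∈ T.label ρ.bot, ∀ ψ ∈ subPlus φ,
      ψ ∈ T.label ρ.bot ∨ simNeg ψ ∈ T.label ρ.bot := by
  have hs : Saturated (T.label ρ.bot) := ρ.saturated_label hT hS hnb hni
  intro φ hφ ψ hψ
  exact hs.mem_or_simNeg_mem_of_mem_subPlus (Or.inl hφ) hψ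

end EpsPaths

/-- in the tableau for `φ₀`, the label of a non-blocked,
non-blatantly-inconsistent maximal `ε`-path is closed under `sub⁺`-formulas. -/
theorem maxEpsPath_label_subPlus_closed {P I : Type} (hI : ∃ i j : I, i ≠ j)
    (φ0 : Formula P I) (T : LTree P I) (hT : IsTableau φ0 T)
    (ρ : MaxEpsPath T Set.univ)
    (hnb : T.blockedBy ρ.bot = none)
    (hni : ¬ Blatant (T.label ρ.bot)) :
    ∀ φ ∈ T.label ρ.bot, ∀ ψ ∈ subPlus φ,
      ψ ∈ T.label ρ.bot ∨ simNeg ψ ∈ T.label ρ.bot := by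
  exact maxEpsPath_label_subPlus_closed_general hT (completeSubtree_univ T) ρ hnb hni

end ELKh
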